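/- With A(v) = -2·log v - 4·log(2π) + (2πv)/3 - 8·Σ_{n=1}^∞ log(1 - e^{-2πnv}), the function A is strictly increasing on [1, ∞). -/

import Mathlib

open Real

lemma exp_neg_two_pi_mul_lt_one (n : ℕ) {v : ℝ} (hv : 0 < v) :
    Real.exp (-2 * π * (n + 1) * v) < 1 := by
  rw [Real.exp_lt_one_iff]
  have : 0 < 2 * π * (n + 1) * v := by positivity
  linarith

lemma summable_log_one_sub_exp {v : ℝ} (hv : 0 < v) :
    Summable fun n : ℕ ↦ Real.log (1 - Real.exp (-2 * π * (n + 1) * v)) := by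
  have h : Summable fun n : ℕ ↦ -Real.exp (-2 * π * (n + 1) * v) := by
    have hg := summable_geometric_of_lt_one (Real.exp_pos _).le
      (exp_neg_two_pi_mul_lt_one 0 hv)
    refine ((summable_nat_add_iff 1).mpr hg).neg.congr fun n ↦ ?_
    rw [← Real.exp_nat_mul]
    push_cast
    ring_nf
  simpa [sub_eq_add_neg] using Real.summable_log_one_add_of_summable h

lemma concaveOn_log_one_sub_exp (n : ℕ) :
    ConcaveOn ℝ (Set.Ioi 0) fun v ↦ Real.log (1 - Real.exp (-2 * π * (n + 1) * v)) := by
  refine ⟨convex_Ioi 0, fun x hx y hy a b ha hb hab ↦ ?_⟩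
  have h1 := sub_pos.mpr (exp_neg_two_pi_mul_lt_one n hx)
  have h2 := sub_pos.mpr (exp_neg_two_pi_mul_lt_one n hy)
  refine (strictConcaveOn_log_Ioi.concaveOn.2 h1 h2 ha hb hab).trans ?_
  refine Real.log_le_log (convex_Ioi (0 : ℝ) h1 h2 ha hb hab) ?_
  have h := convexOn_exp.2 (Set.mem_univ (-2 * π * (n + 1) * x))
    (Set.mem_univ (-2 * π * (n + 1) * y)) ha hb hab
  simp only [smul_eq_mul] at h ⊢
  rw [show -2 * π * (n + 1) * (a * x + b * y) =
    a * (-2 * π * (n + 1) * x) + b * (-2 * π * (n + 1) * y) by ring]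
  linarith

lemma concaveOn_tsum_log_one_sub_exp :
    ConcaveOn ℝ (Set.Ioi 0)
      fun v ↦ ∑' n : ℕ, Real.log (1 - Real.exp (-2 * π * (n + 1) * v)) := by
  refine ⟨convex_Ioi 0, fun x hx y hy a b ha hb hab ↦ ?_⟩
  have hsx := (summable_log_one_sub_exp hx).mul_left a
  have hsy := (summable_log_one_sub_exp hy).mul_left b
  simp only [smul_eq_mul]
  rw [← tsum_mul_left, ← tsum_mul_left, ← hsx.tsum_add hsy]
  exact (hsx.add hsy).tsum_le_tsum (fun n ↦ (concaveOn_log_one_sub_exp n).2 hx hy ha hb hab)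
    (summable_log_one_sub_exp (convex_Ioi (0 : ℝ) hx hy ha hb hab))

lemma log_norm_eta_I_mul {v : ℝ} (hv : 0 < v) :
    Real.log ‖ModularForm.eta (Complex.I * v)‖ =
      -(π * v / 12) + ∑' n : ℕ, Real.log (1 - Real.exp (-2 * π * (n + 1) * v)) := by
  have hz : Complex.I * v ∈ UpperHalfPlane.upperHalfPlaneSet := by
    simpa [UpperHalfPlane.upperHalfPlaneSet] using hv
  have hnorm : ∀ n : ℕ, ‖1 - ModularForm.eta_q n (Complex.I * v)‖ =
      1 - Real.exp (-2 * π * (n + 1) * v) := fun n ↦ by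
    rw [ModularForm.eta_q_eq_cexp, show 2 * (π : ℂ) * Complex.I * (n + 1) * (Complex.I * v) =
      ((-2 * π * (n + 1) * v : ℝ) : ℂ) by
        push_cast
        linear_combination 2 * (π : ℂ) * (n + 1) * v * Complex.I_mul_I]
    rw [← Complex.ofReal_exp, ← Complex.ofReal_one, ← Complex.ofReal_sub, Complex.norm_real,
      Real.norm_of_nonneg (sub_pos.mpr (exp_neg_two_pi_mul_lt_one n hv)).le]
  have hprod := ModularForm.multipliableLocallyUniformlyOn_eta.multipliable hz
  have hq : ‖Function.Periodic.qParam 24 (Complex.I * v)‖ = Real.exp (-(π * v / 12)) := by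
    rw [Function.Periodic.norm_qParam]
    simp
    ring
  rw [ModularForm.eta, norm_mul, hq, hprod.norm_tprod, tprod_congr hnorm,
    ← Real.rexp_tsum_eq_tprod
      (fun n ↦ sub_pos.mpr (exp_neg_two_pi_mul_lt_one n hv)) (summable_log_one_sub_exp hv),
    ← Real.exp_add, Real.log_exp]

lemma log_norm_eta_I_mul_inv {v : ℝ} (hv : 0 < v) :
    Real.log ‖ModularForm.eta (Complex.I * (v⁻¹ : ℝ))‖ =
      Real.log v / 2 + Real.log ‖ModularForm.eta (Complex.I * v)‖ := by
  have hz : Complex.I * v ∈ UpperHalfPlane.upperHalfPlaneSet := by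
    simpa [UpperHalfPlane.upperHalfPlaneSet] using hv
  have hS := ModularForm.eta_comp_eq_csqrt_I_inv hz
  have hinv : -1 / (Complex.I * v) = Complex.I * (v⁻¹ : ℝ) := by
    have : (v : ℂ) ≠ 0 := mod_cast hv.ne'
    push_cast
    field_simp
    simp
  have hsqrt : ∀ z : ℂ, ‖Complex.sqrt z‖ = √‖z‖ := fun z ↦ by
    rw [Complex.sqrt, Real.sqrt_eq_rpow, ← Complex.norm_cpow_real]
    norm_num
  simp only [Function.comp_apply, hinv, Pi.smul_apply, Pi.mul_apply, smul_eq_mul] at hS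
  rw [hS]
  simp only [norm_mul, norm_inv, hsqrt, Complex.norm_I, Complex.norm_real, Real.sqrt_one, inv_one,
    one_mul, Real.norm_of_nonneg hv.le]
  rw [Real.log_mul (Real.sqrt_ne_zero'.mpr hv) (norm_ne_zero_iff.mpr (ModularForm.eta_ne_zero hz)),
    Real.log_sqrt hv.le]

/-- With `A(v) = -2 log v - 4 log(2π) + 2πv/3 - 8 Σ_{n≥1} log(1 - e^{-2πnv})`,
the function `A` is strictly increasing on `[1, ∞)`. -/
theorem green_constant_strictMono
    (A : ℝ → ℝ)
    (hA : ∀ v : ℝ, 0 < v → A v = -2 * Real.log v - 4 * Real.log (2 * π) + 2 * π * v / 3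
      - 8 * ∑' n : ℕ, Real.log (1 - Real.exp (-2 * π * (n + 1) * v))) :
    StrictMonoOn A (Set.Ici 1) := by
  have hconv : StrictConvexOn ℝ (Set.Ioi 0) A := by
    refine ⟨convex_Ioi 0, fun x hx y hy hxy a b ha hb hab ↦ ?_⟩
    have hlog := strictConcaveOn_log_Ioi.2 hx hy hxy ha hb hab
    have hsum := concaveOn_tsum_log_one_sub_exp.2 hx hy ha.le hb.le hab
    rw [hA x hx, hA y hy, hA _ (convex_Ioi (0 : ℝ) hx hy ha.le hb.le hab)]
    simp only [smul_eq_mul] at hlog hsum ⊢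
    linear_combination 2 * hlog + 8 * hsum + 4 * Real.log (2 * π) * hab
  have hinv : ∀ v, 0 < v → A v⁻¹ = A v := fun v hv ↦ by
    have h := log_norm_eta_I_mul_inv hv
    rw [log_norm_eta_I_mul hv, log_norm_eta_I_mul (inv_pos.mpr hv)] at h
    rw [hA v hv, hA _ (inv_pos.mpr hv), Real.log_inv]
    linear_combination -8 * h
  intro x hx y hy hxy
  have hx1 : 1 ≤ x := hx
  have hy0 : 0 < y := by linarith
  have hyx : y⁻¹ < x := (inv_lt_one_of_one_lt₀ (hx1.trans_lt hxy)).trans_le hx1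
  have h := hconv.lt_on_openSegment (inv_pos.mpr hy0) hy0 (hyx.trans hxy).ne
    (by rw [openSegment_eq_Ioo (hyx.trans hxy)]; exact ⟨hyx, hxy⟩)
  rwa [hinv y hy0, max_self] at h
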